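/- arXiv:2412.19280 — 2 statements merged into one kernel-verified Lean document; each statement's English description precedes it below -/
import Mathlib

section
/- Let G : ℓ^m → ℓ^r be strictly causal, and consider feedback controllers K : ℓ^r × ℓ^m → ℓ^m that are causal–strictly-causal (causal in the measurement y, strictly causal in the input u), generating the closed loop y = G u + v, u = K(y,u) + d; for each (v,d) ∈ ℓ^r × ℓ^m these equations have a unique solution (y,u), defining the closed-loop map Φ_{G,K}. A map Ψ = (Ψ^y, Ψ^u) : ℓ^r × ℓ^m → ℓ^r × ℓ^m, with Ψ^{u°}(v,d) := Ψ^u(v,d) − d, equals Φ_{G,K} for some such controller K if and only if: (a) Ψ^{u°} is causal–strictly-causal, and (b) Ψ^y(v,d) = G(Ψ^u(v,d)) + v for every (v,d). Moreover, under (a)–(b) the map Ψ is a bijection of ℓ^r × ℓ^m, and the achieving controller is unique, given by K(y,u) = Ψ^{u°}(Ψ^{-1}(y,u)). -/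
/-- Sequences with values in `ℝ^n` (with the Euclidean norm). -/
abbrev Traj (n : ℕ) : Type := ℕ → EuclideanSpace ℝ (Fin n)

/-- A causal operator on sequences. -/
def Causal {n m : ℕ} (A : Traj n → Traj m) : Prop :=
  ∀ (x x' : Traj n) (t : ℕ), (∀ s, s ≤ t → x s = x' s) → A x t = A x' t

/-- A strictly causal operator on sequences. -/
def StrictlyCausal {n m : ℕ} (A : Traj n → Traj m) : Prop :=
  ∀ (x x' : Traj n) (t : ℕ), (∀ s, s < t → x s = x' s) → A x t = A x' t

/-- Causal in the first argument, strictly causal in the second argument. -/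
def CausalSC {n q m : ℕ} (B : Traj n → Traj q → Traj m) : Prop :=
  ∀ (x x' : Traj n) (z z' : Traj q) (t : ℕ),
    (∀ s, s ≤ t → x s = x' s) → (∀ s, s < t → z s = z' s) → B x z t = B x' z' t

/-- Causal in both arguments. -/
def CausalCC {n q m : ℕ} (B : Traj n → Traj q → Traj m) : Prop :=
  ∀ (x x' : Traj n) (z z' : Traj q) (t : ℕ),
    (∀ s, s ≤ t → x s = x' s) → (∀ s, s ≤ t → z s = z' s) → B x z t = B x' z' t

/-- Strictly causal in both arguments. -/
def CausalSS {n q m : ℕ} (B : Traj n → Traj q → Traj m) : Prop :=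
  ∀ (x x' : Traj n) (z z' : Traj q) (t : ℕ),
    (∀ s, s < t → x s = x' s) → (∀ s, s < t → z s = z' s) → B x z t = B x' z' t

/-- Membership in `ℓ_p`: summability of `‖x t‖ ^ p`. -/
def InLp (p : ℝ) {E : Type*} [Norm E] (x : ℕ → E) : Prop :=
  Summable fun t => ‖x t‖ ^ p

/-- The `ℓ_p` norm `(∑ₜ ‖x t‖ ^ p) ^ (1/p)` of a sequence. -/
noncomputable def lpSeqNorm (p : ℝ) {E : Type*} [Norm E] (x : ℕ → E) : ℝ :=
  (∑' t, ‖x t‖ ^ p) ^ (1 / p)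

/-- The `ℝ^{r+m}`-valued sequence obtained by stacking `v` and `d`
(the norm of `(v t, d t)` is the Euclidean norm of the concatenated vector). -/
noncomputable def pairSeq {r m : ℕ} (v : Traj r) (d : Traj m) :
    ℕ → WithLp 2 (EuclideanSpace ℝ (Fin r) × EuclideanSpace ℝ (Fin m)) :=
  fun t => (WithLp.equiv 2 _).symm (v t, d t)

/-- An exponentially decaying sequence: `‖x t‖ ≤ k · α ^ t` with `k > 0`, `α ∈ (0,1)`. -/
def ExpDecay {E : Type*} [Norm E] (x : ℕ → E) : Prop :=
  ∃ k : ℝ, 0 < k ∧ ∃ α : ℝ, 0 < α ∧ α < 1 ∧ ∀ t, ‖x t‖ ≤ k * α ^ t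

/-!
Substituting `y = G u + v` turns a controller `K` into the operator `F v u = K (G u + v) u`. As `G`
is strictly causal, this change of variables and its inverse, the same substitution for `-G`,
preserve causality in the first and strict causality in the second argument. The loop becomes
`u = F v u + d`, the fixed-point equation of a strictly causal map, so that it has a unique solution
`u = S v d`, constructed recursively in time. The inverse `d = T v u` of `u = S v d` solves
`d = -(S v d - d) + u`, an equation of the same form. Hence passing from `F` to `S v d - d` and
back from `S v d - d` to `F v u = u - T v u` are two instances of one statement about causality.
-/

section Causality

variable {ι α β γ : Type*} [Preorder ι]

/-- A strictly causal operator between signals with arbitrary values over an arbitrary preordered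
time axis; for sequences in `ℝ^n` this is `StrictlyCausal`. -/
def IsStrictlyCausal (A : (ι → α) → ι → β) : Prop :=
  ∀ (x x' : ι → α) (t : ι), (∀ s, s < t → x s = x' s) → A x t = A x' t

/-- An operator on pairs of signals that is causal in the first and strictly causal in the second
argument; for sequences in `ℝ^n` this is `CausalSC`. -/
def IsCausalStrictlyCausal (B : (ι → α) → (ι → β) → ι → γ) : Prop :=
  ∀ (x x' : ι → α) (z z' : ι → β) (t : ι),
    (∀ s, s ≤ t → x s = x' s) → (∀ s, s < t → z s = z' s) → B x z t = B x' z' t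

theorem IsStrictlyCausal.neg [Neg β] {A : (ι → α) → ι → β} (hA : IsStrictlyCausal A) :
    IsStrictlyCausal fun x => -A x :=
  fun x x' t h => congrArg Neg.neg (hA x x' t h)

theorem IsStrictlyCausal.add_const [Add β] {A : (ι → α) → ι → β} (hA : IsStrictlyCausal A)
    (w : ι → β) : IsStrictlyCausal fun x => A x + w :=
  fun x x' t h => congrArg (· + w t) (hA x x' t h)

theorem IsStrictlyCausal.fixedPoint_unique [WellFoundedLT ι] {F : (ι → α) → ι → α}
    (hF : IsStrictlyCausal F) {x x' : ι → α} (hx : x = F x) (hx' : x' = F x') : x = x' := by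
  ext t
  induction t using WellFoundedLT.induction with
  | ind t ih => rw [hx, hx']; exact hF x x' t ih

theorem IsStrictlyCausal.existsUnique_fixedPoint [WellFoundedLT ι] [Nonempty α]
    {F : (ι → α) → ι → α} (hF : IsStrictlyCausal F) : ∃! x, x = F x := by
  classical
  let extend (t : ι) (past : ∀ s, s < t → α) : ι → α :=
    fun s => if h : s < t then past s h else Classical.arbitrary α
  let x : ι → α := WellFoundedLT.fix fun t past => F (extend t past) t
  have x_eq_extend (t : ι) : x t = F (extend t fun s _ => x s) t := WellFoundedLT.fix_eq _ t
  have x_fixed : x = F x := by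
    ext t
    rw [x_eq_extend t]
    exact hF _ _ t fun s hs => dif_pos hs
  exact ⟨x, x_fixed, fun x' hx' => hF.fixedPoint_unique hx' x_fixed⟩

namespace IsCausalStrictlyCausal

theorem neg [Neg γ] {B : (ι → α) → (ι → β) → ι → γ} (hB : IsCausalStrictlyCausal B) :
    IsCausalStrictlyCausal fun x z => -B x z :=
  fun x x' z z' t hx hz => congrArg Neg.neg (hB x x' z z' t hx hz)

theorem isStrictlyCausal {B : (ι → α) → (ι → β) → ι → γ} (hB : IsCausalStrictlyCausal B)
    (x : ι → α) : IsStrictlyCausal (B x) :=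
  fun z z' t hz => hB x x z z' t (fun _ _ => rfl) hz

theorem comp_add [Add α] {B : (ι → α) → (ι → β) → ι → γ} {G : (ι → β) → ι → α}
    (hB : IsCausalStrictlyCausal B) (hG : IsStrictlyCausal G) :
    IsCausalStrictlyCausal fun x z => B (G z + x) z := by
  refine fun x x' z z' t hx hz => hB _ _ z z' t (fun s hs => ?_) hz
  exact congrArg₂ (· + ·) (hG z z' s fun q hq => hz q (hq.trans_le hs)) (hx s hs)

section Feedback

variable [WellFoundedLT ι] [AddGroup β] {F S : (ι → α) → (ι → β) → ι → β}

theorem existsUnique_feedback (hF : IsCausalStrictlyCausal F) (v : ι → α) (d : ι → β) :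
    ∃! u, u = F v u + d :=
  ((hF.isStrictlyCausal v).add_const d).existsUnique_fixedPoint

theorem sub_of_feedback (hF : IsCausalStrictlyCausal F) (hS : ∀ v d, S v d = F v (S v d) + d) :
    IsCausalStrictlyCausal fun v d => S v d - d := by
  intro v v' d d' t hv hd
  have past (s : ι) : s < t → S v d s = S v' d' s := by
    induction s using WellFoundedLT.induction with
    | ind s ih =>
      intro hs
      rw [hS v d, hS v' d']
      exact congrArg₂ (· + ·) (hF _ _ _ _ s (fun q hq => hv q (hq.trans hs.le))
        fun q hq => ih q hq (hq.trans hs)) (hd s hs)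
  have sub_eq (v : ι → α) (d : ι → β) : S v d - d = F v (S v d) := sub_eq_of_eq_add (hS v d)
  simp only [sub_eq]
  exact hF _ _ _ _ t hv past

theorem bijective_of_sub (hS : IsCausalStrictlyCausal fun v d => S v d - d) (v : ι → α) :
    Function.Bijective (S v) := by
  have solves_iff (d u : ι → β) : d = -(S v d - d) + u ↔ S v d = u := by
    rw [eq_neg_add_iff_add_eq, sub_add_cancel]
  rw [Function.bijective_iff_existsUnique]
  intro u
  simpa only [solves_iff] using hS.neg.existsUnique_feedback v u

theorem exists_feedback_of_sub (hS : IsCausalStrictlyCausal fun v d => S v d - d) :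
    ∃ F : (ι → α) → (ι → β) → ι → β,
      IsCausalStrictlyCausal F ∧ ∀ v d, S v d = F v (S v d) + d := by
  choose T hTS hST using fun v => Function.bijective_iff_has_inverse.mp (hS.bijective_of_sub v)
  have hT (v : ι → α) (u : ι → β) : T v u = -(S v (T v u) - T v u) + u := by
    rw [hST v u, neg_sub, sub_add_cancel]
  refine ⟨fun v u => -(T v u - u), (hS.neg.sub_of_feedback hT).neg, fun v d => ?_⟩
  beta_reduce
  rw [hTS v d, neg_sub, sub_add_cancel]

end Feedback

end IsCausalStrictlyCausal

end Causality

section ClosedLoop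

variable {ι Y U : Type*} [AddGroup Y] [AddGroup U] {G : (ι → U) → ι → Y}
  {K K' : (ι → Y) → (ι → U) → ι → U} {Ψy : (ι → Y) → (ι → U) → ι → Y}
  {Ψu : (ι → Y) → (ι → U) → ι → U}

/-- `Ψ = (Ψy, Ψu)` is the closed-loop map `Φ_{G,K}`: it sends the disturbances `(v, d)` to a
solution `(y, u)` of `y = G u + v`, `u = K y u + d`. Uniqueness of this solution is not part of
the definition; see `existsUnique_closedLoop`. -/
def IsClosedLoopMap (G : (ι → U) → ι → Y) (K : (ι → Y) → (ι → U) → ι → U)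
    (Ψy : (ι → Y) → (ι → U) → ι → Y) (Ψu : (ι → Y) → (ι → U) → ι → U) : Prop :=
  ∀ v d, Ψy v d = G (Ψu v d) + v ∧ Ψu v d = K (Ψy v d) (Ψu v d) + d

namespace IsClosedLoopMap

theorem controller_apply (h : IsClosedLoopMap G K Ψy Ψu) (v : ι → Y) (d : ι → U) :
    K (Ψy v d) (Ψu v d) = Ψu v d - d :=
  eq_sub_of_add_eq (h v d).2.symm

theorem controller_unique (h : IsClosedLoopMap G K Ψy Ψu) (h' : IsClosedLoopMap G K' Ψy Ψu)
    (hΨ : Function.Surjective fun vd : (ι → Y) × (ι → U) => (Ψy vd.1 vd.2, Ψu vd.1 vd.2)) :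
    K = K' := by
  ext1 y
  ext1 u
  obtain ⟨⟨v, d⟩, hvd⟩ := hΨ (y, u)
  obtain ⟨rfl, rfl⟩ := Prod.mk.inj hvd
  rw [h.controller_apply, h'.controller_apply]

end IsClosedLoopMap

variable [Preorder ι] [WellFoundedLT ι]

theorem existsUnique_closedLoop (hG : IsStrictlyCausal G) (hK : IsCausalStrictlyCausal K)
    (v : ι → Y) (d : ι → U) :
    ∃! yu : (ι → Y) × (ι → U), yu.1 = G yu.2 + v ∧ yu.2 = K yu.1 yu.2 + d := by
  obtain ⟨u, hu, hu_unique⟩ := (hK.comp_add hG).existsUnique_feedback v d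
  refine ⟨(G u + v, u), ⟨rfl, hu⟩, ?_⟩
  rintro ⟨y', u'⟩ ⟨hy' : y' = G u' + v, hu' : u' = K y' u' + d⟩
  subst hy'
  rw [hu_unique u' hu']

theorem IsClosedLoopMap.isCausalStrictlyCausal_sub (h : IsClosedLoopMap G K Ψy Ψu)
    (hG : IsStrictlyCausal G) (hK : IsCausalStrictlyCausal K) :
    IsCausalStrictlyCausal fun v d => Ψu v d - d :=
  (hK.comp_add hG).sub_of_feedback fun v d => by rw [← (h v d).1]; exact (h v d).2

theorem exists_isClosedLoopMap (hG : IsStrictlyCausal G)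
    (hΨu : IsCausalStrictlyCausal fun v d => Ψu v d - d)
    (hΨy : ∀ v d, Ψy v d = G (Ψu v d) + v) :
    ∃ K, IsCausalStrictlyCausal K ∧ IsClosedLoopMap G K Ψy Ψu := by
  obtain ⟨F, hF, hFΨ⟩ := hΨu.exists_feedback_of_sub
  refine ⟨fun y u => F (-G u + y) u, hF.comp_add hG.neg, fun v d => ⟨hΨy v d, ?_⟩⟩
  beta_reduce
  rw [hΨy v d, neg_add_cancel_left]
  exact hFΨ v d

theorem bijective_of_isCausalStrictlyCausal_sub
    (hΨu : IsCausalStrictlyCausal fun v d => Ψu v d - d)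
    (hΨy : ∀ v d, Ψy v d = G (Ψu v d) + v) :
    Function.Bijective fun vd : (ι → Y) × (ι → U) => (Ψy vd.1 vd.2, Ψu vd.1 vd.2) := by
  constructor
  · rintro ⟨v, d⟩ ⟨v', d'⟩ h
    obtain ⟨hy, hu⟩ : Ψy v d = Ψy v' d' ∧ Ψu v d = Ψu v' d' := Prod.mk.inj h
    obtain rfl : v = v' := by rwa [hΨy, hΨy, hu, add_right_inj] at hy
    rw [(hΨu.bijective_of_sub v).injective hu]
  · rintro ⟨y, u⟩
    obtain ⟨d, hd⟩ := (hΨu.bijective_of_sub (-G u + y)).surjective u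
    have hy : Ψy (-G u + y) d = y := by rw [hΨy, hd, add_neg_cancel_left]
    exact ⟨(-G u + y, d), Prod.ext hy hd⟩

theorem statement16_general (G : (ι → U) → ι → Y) (hG : IsStrictlyCausal G)
    (Ψy : (ι → Y) → (ι → U) → ι → Y) (Ψu : (ι → Y) → (ι → U) → ι → U) :
    (∀ K, IsCausalStrictlyCausal K → ∀ (v : ι → Y) (d : ι → U),
      ∃! yu : (ι → Y) × (ι → U), yu.1 = G yu.2 + v ∧ yu.2 = K yu.1 yu.2 + d) ∧
    ((∃ K, IsCausalStrictlyCausal K ∧ IsClosedLoopMap G K Ψy Ψu) ↔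
      (IsCausalStrictlyCausal (fun v d => Ψu v d - d) ∧ ∀ v d, Ψy v d = G (Ψu v d) + v)) ∧
    ((IsCausalStrictlyCausal (fun v d => Ψu v d - d) ∧ ∀ v d, Ψy v d = G (Ψu v d) + v) →
      Function.Bijective
        (fun vd : (ι → Y) × (ι → U) => (Ψy vd.1 vd.2, Ψu vd.1 vd.2)) ∧
      (∃! K, IsCausalStrictlyCausal K ∧ IsClosedLoopMap G K Ψy Ψu) ∧
      (∀ K, IsCausalStrictlyCausal K → IsClosedLoopMap G K Ψy Ψu →
        ∀ y v u d, (Ψy v d, Ψu v d) = (y, u) → K y u = Ψu v d - d)) := by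
  refine ⟨fun K hK => existsUnique_closedLoop hG hK, ⟨?_, ?_⟩, ?_⟩
  · rintro ⟨K, hK, hKΨ⟩
    exact ⟨hKΨ.isCausalStrictlyCausal_sub hG hK, fun v d => (hKΨ v d).1⟩
  · rintro ⟨hΨu, hΨy⟩
    exact exists_isClosedLoopMap hG hΨu hΨy
  · rintro ⟨hΨu, hΨy⟩
    have hbij := bijective_of_isCausalStrictlyCausal_sub hΨu hΨy
    obtain ⟨K, hK, hKΨ⟩ := exists_isClosedLoopMap hG hΨu hΨy
    refine ⟨hbij, ⟨K, ⟨hK, hKΨ⟩, fun K' hK' => hK'.2.controller_unique hKΨ hbij.surjective⟩, ?_⟩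
    rintro K' - hKΨ' _ v _ d ⟨⟩
    exact hKΨ'.controller_apply v d

end ClosedLoop

/-- achievable closed-loop maps with measurable input disturbances, i.e. with
controllers `u = K(y,u) + d` that are causal in `y` and strictly causal in `u`: the
achievability constraints reduce to (a) causality of `Ψ^{u°}` and (b) `Ψ^y = G Ψ^u + v`;
under (a)-(b), `Ψ` is a bijection and the achieving controller is unique, given by
`K(y,u) = Ψ^{u°}(Ψ⁻¹(y,u))`. -/
theorem statement16 {r m : ℕ} (G : Traj m → Traj r) (hG : StrictlyCausal G)
    (Ψy : Traj r → Traj m → Traj r) (Ψu : Traj r → Traj m → Traj m) :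
    -- the closed loop with any causal–strictly-causal K is well posed
    (∀ K : Traj r → Traj m → Traj m, CausalSC K →
      ∀ (v : Traj r) (d : Traj m),
        ∃! yu : Traj r × Traj m, yu.1 = G yu.2 + v ∧ yu.2 = K yu.1 yu.2 + d) ∧
    -- Ψ is achievable iff (a) and (b) hold
    ((∃ K : Traj r → Traj m → Traj m, CausalSC K ∧
        ∀ (v : Traj r) (d : Traj m),
          Ψy v d = G (Ψu v d) + v ∧ Ψu v d = K (Ψy v d) (Ψu v d) + d)
      ↔
      (CausalSC (fun (v : Traj r) (d : Traj m) => Ψu v d - d) ∧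
       ∀ (v : Traj r) (d : Traj m), Ψy v d = G (Ψu v d) + v)) ∧
    -- under (a)-(b): bijectivity of Ψ, uniqueness of K, and the controller formula
    ((CausalSC (fun (v : Traj r) (d : Traj m) => Ψu v d - d) ∧
      (∀ (v : Traj r) (d : Traj m), Ψy v d = G (Ψu v d) + v)) →
      Function.Bijective
        (fun vd : Traj r × Traj m => (Ψy vd.1 vd.2, Ψu vd.1 vd.2)) ∧
      (∃! K : Traj r → Traj m → Traj m, CausalSC K ∧
        ∀ (v : Traj r) (d : Traj m),
          Ψy v d = G (Ψu v d) + v ∧ Ψu v d = K (Ψy v d) (Ψu v d) + d) ∧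
      (∀ K : Traj r → Traj m → Traj m, CausalSC K →
        (∀ (v : Traj r) (d : Traj m),
          Ψy v d = G (Ψu v d) + v ∧ Ψu v d = K (Ψy v d) (Ψu v d) + d) →
        ∀ (y v : Traj r) (u d : Traj m),
          (Ψy v d, Ψu v d) = (y, u) → K y u = Ψu v d - d)) :=
  statement16_general G hG Ψy Ψu
end

section
/- Let p be a real number with 1 ≤ p < ∞, and let G : ℓ^m → ℓ^r be strictly causal and ℓ_p-stable. Let Ψ^{u°} : ℓ^r × ℓ^m → ℓ^m be causal–strictly-causal, and define Ψ^u(v,d) := d + Ψ^{u°}(v,d) and Ψ^y(v,d) := G(Ψ^u(v,d)) + v. Then the map (Ψ^y, Ψ^u) is ℓ_p-stable — i.e., Ψ^y(v,d) ∈ ℓ_p^r and Ψ^u(v,d) ∈ ℓ_p^m whenever v ∈ ℓ_p^r and d ∈ ℓ_p^m — if and only if Ψ^{u°} is ℓ_p-stable, i.e., Ψ^{u°}(v,d) ∈ ℓ_p^m whenever v ∈ ℓ_p^r and d ∈ ℓ_p^m. -/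
section

variable {E F : Type*} [NormedAddCommGroup E] [NormedAddCommGroup F] {p : ℝ} {x y : ℕ → E}

theorem inLp_iff_memℓp (hp : 0 < p) : InLp p x ↔ Memℓp x (ENNReal.ofReal p) := by
  have toReal_ofReal : (ENNReal.ofReal p).toReal = p := ENNReal.toReal_ofReal hp.le
  rw [memℓp_gen_iff (toReal_ofReal.symm ▸ hp), toReal_ofReal, InLp]

theorem InLp.add (hp : 0 < p) (hx : InLp p x) (hy : InLp p y) : InLp p (x + y) := by
  rw [inLp_iff_memℓp hp] at *
  exact Memℓp.add hx hy

theorem InLp.add_iff_right (hp : 0 < p) (hx : InLp p x) : InLp p (x + y) ↔ InLp p y := by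
  refine ⟨fun hxy => ?_, hx.add hp⟩
  have neg_mem : InLp p (-x) := by simpa only [InLp, Pi.neg_apply, norm_neg] using hx
  simpa only [neg_add_cancel_left] using neg_mem.add hp hxy

theorem statement17_general (hp : 0 < p) (G : (ℕ → E) → ℕ → F)
    (hGstab : ∀ u, InLp p u → InLp p (G u)) (Ψuo : (ℕ → F) → (ℕ → E) → ℕ → E) :
    (∀ v d, InLp p v → InLp p d → InLp p (G (d + Ψuo v d) + v) ∧ InLp p (d + Ψuo v d)) ↔
      ∀ v d, InLp p v → InLp p d → InLp p (Ψuo v d) := by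
  refine forall₄_congr fun v d hv hd => ?_
  have output_mem (hu : InLp p (d + Ψuo v d)) : InLp p (G (d + Ψuo v d) + v) :=
    (hGstab _ hu).add hp hv
  rw [and_iff_right_of_imp output_mem, hd.add_iff_right hp]

end

/-- for a strictly causal ℓ_p-stable plant `G` and a causal–strictly-causal
parameter `Ψ^{u°}`, the closed-loop maps `Ψ^u(v,d) = d + Ψ^{u°}(v,d)`,
`Ψ^y(v,d) = G(Ψ^u(v,d)) + v` are ℓ_p-stable iff `Ψ^{u°}` is ℓ_p-stable. -/
theorem statement17 {r m : ℕ} (p : ℝ) (hp : 1 ≤ p)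
    (G : Traj m → Traj r)
    (hG : StrictlyCausal G)
    (hGstab : ∀ u : Traj m, InLp p u → InLp p (G u))
    (Ψuo : Traj r → Traj m → Traj m)
    (hΨuo : CausalSC Ψuo) :
    ((∀ (v : Traj r) (d : Traj m), InLp p v → InLp p d →
        InLp p (G (d + Ψuo v d) + v) ∧ InLp p (d + Ψuo v d))
      ↔
      (∀ (v : Traj r) (d : Traj m), InLp p v → InLp p d → InLp p (Ψuo v d))) :=
  statement17_general (zero_lt_one.trans_le hp) G hGstab Ψuo
end
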